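/- Let n ≥ 1 and δ ∈ (0, n). There exists a constant c > 0 depending only on δ and n such that for every f : ℝⁿ → [−∞, ∞] with ∫_K |f| dH̃^δ_∞ < ∞ for every bounded set K ⊆ ℝⁿ, and for every t > 0, the weak-type estimate H̃^δ_∞({x ∈ ℝⁿ : M^n f(x) > t}) ≤ (c/t) ∫_{ℝⁿ} |f| dH̃^δ_∞ holds, where M^n is the n-dimensional Hausdorff-content centred maximal operator. -/

import Mathlib

open MeasureTheory Set Metric Filter Topology
open scoped ENNReal

noncomputable section

/-- Euclidean space `ℝⁿ`. -/
abbrev En (n : ℕ) : Type := EuclideanSpace ℝ (Fin n)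

/-- The half-open dyadic cube `2^k (m + [0,1)ⁿ)`, `k : ℤ`, `m : ℤⁿ`. -/
def dyadicCube (n : ℕ) (k : ℤ) (m : Fin n → ℤ) : Set (En n) :=
  {x | ∀ i, (m i : ℝ) * 2 ^ k ≤ x i ∧ x i < ((m i : ℝ) + 1) * 2 ^ k}

/-- The `δ`-dimensional dyadic Hausdorff content `H̃^δ_∞`: the infimum of `Σ ℓ(Q_i)^δ`
over all countable collections of dyadic cubes whose union's interior covers `E`. -/
def dyadicContent (n : ℕ) (δ : ℝ) (E : Set (En n)) : ℝ≥0∞ :=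
  ⨅ (c : ℕ → ℤ × (Fin n → ℤ))
    (_ : E ⊆ interior (⋃ i, dyadicCube n (c i).1 (c i).2)),
    ∑' i, ENNReal.ofReal (((2 : ℝ) ^ (c i).1) ^ δ)

/-- The Choquet integral `∫_Ω f dH̃^δ_∞ := ∫_0^∞ H̃^δ_∞({x ∈ Ω : f x > t}) dt`
of a `[0,∞]`-valued function over `Ω ⊆ ℝⁿ`. -/
def choquetIntegral (n : ℕ) (δ : ℝ) (Ω : Set (En n)) (f : En n → ℝ≥0∞) : ℝ≥0∞ :=
  ∫⁻ t in Ioi (0 : ℝ), dyadicContent n δ {x | x ∈ Ω ∧ ENNReal.ofReal t < f x}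

/-- The Choquet integral `∫_Ω |f| dH̃^δ_∞` of a real-valued function. -/
def choquetIntegralAbs (n : ℕ) (δ : ℝ) (Ω : Set (En n)) (f : En n → ℝ) : ℝ≥0∞ :=
  choquetIntegral n δ Ω (fun x => ENNReal.ofReal |f x|)

/-- The Choquet integral `∫_Ω |f| dH̃^δ_∞` of an extended-real-valued function. -/
def choquetIntegralEAbs (n : ℕ) (δ : ℝ) (Ω : Set (En n)) (f : En n → EReal) : ℝ≥0∞ :=
  choquetIntegral n δ Ω (fun x => (f x).abs)

/-- The ball average `f^δ_{B(x,r)} := (1/H̃^δ_∞(B(x,r))) ∫_{B(x,r)} f dH̃^δ_∞`. -/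
def ballAvg (n : ℕ) (δ : ℝ) (f : En n → ℝ≥0∞) (x : En n) (r : ℝ) : ℝ≥0∞ :=
  choquetIntegral n δ (ball x r) f / dyadicContent n δ (ball x r)

/-- The Hausdorff-content centred maximal function `M^δ f(x)`. -/
def maximal (n : ℕ) (δ : ℝ) (f : En n → ℝ≥0∞) (x : En n) : ℝ≥0∞ :=
  ⨆ (r : ℝ) (_ : 0 < r), ballAvg n δ f x r

/-- `f^δ_*(x) := limsup_{r→0⁺} (1/H̃^δ_∞(B(x,r))) ∫_{B(x,r)} |f(y) − f(x)| dH̃^δ_∞(y)`. -/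
def lebDev (n : ℕ) (δ : ℝ) (f : En n → ℝ) (x : En n) : ℝ≥0∞ :=
  limsup (fun r : ℝ => choquetIntegralAbs n δ (ball x r) (fun y => f y - f x) /
    dyadicContent n δ (ball x r)) (𝓝[>] (0 : ℝ))

/-- `limsup_{r→0⁺} f^δ_{B(x,r)}` of the ball averages. -/
def limsupAvg (n : ℕ) (δ : ℝ) (f : En n → ℝ≥0∞) (x : En n) : ℝ≥0∞ :=
  limsup (fun r : ℝ => ballAvg n δ f x r) (𝓝[>] (0 : ℝ))

/-- cover indexed by any countable type -/
theorem content_le_of_cover {n : ℕ} {δ : ℝ} (hδ : 0 < δ) {ι : Type} [Countable ι]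
    (c : ι → ℤ × (Fin n → ℤ)) (E : Set (En n))
    (h : E ⊆ interior (⋃ i, dyadicCube n (c i).1 (c i).2)) :
    dyadicContent n δ E ≤ ∑' i, ENNReal.ofReal (((2 : ℝ) ^ (c i).1) ^ δ) := by
  refine ENNReal.le_of_forall_pos_le_add ?_
  intro ε hε _
  obtain ⟨e, he0, hes⟩ := ENNReal.exists_pos_sum_of_countable
    (ε := (ε : ℝ≥0∞)) (by simpa using hε.ne') ℕ
  have hk : ∀ j : ℕ, ∃ k : ℤ, ENNReal.ofReal (((2 : ℝ) ^ k) ^ δ) ≤ (e j : ℝ≥0∞) := by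
    intro j
    have h1 : (2 : ℝ) ^ (-δ) < 1 :=
      Real.rpow_lt_one_of_one_lt_of_neg (by norm_num) (by linarith)
    have h0 : (0 : ℝ) ≤ (2 : ℝ) ^ (-δ) := by positivity
    obtain ⟨N, hN⟩ := exists_pow_lt_of_lt_one (y := (2 : ℝ) ^ (-δ))
      (x := (e j : ℝ)) (by exact_mod_cast he0 j) h1
    refine ⟨-(N : ℤ), ?_⟩
    have : ((2 : ℝ) ^ (-(N : ℤ))) ^ δ = ((2 : ℝ) ^ (-δ)) ^ N := by
      rw [← Real.rpow_intCast, ← Real.rpow_natCast, ← Real.rpow_mul (by norm_num),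
        ← Real.rpow_mul (by norm_num)]
      congr 1
      push_cast
      ring
    rw [this]
    rw [← ENNReal.ofReal_coe_nnreal]
    exact ENNReal.ofReal_le_ofReal hN.le
  choose k hk using hk
  let c' : ι ⊕ ℕ → ℤ × (Fin n → ℤ) := Sum.elim c (fun j => (k j, fun _ => 0))
  obtain ⟨d⟩ : Nonempty (Denumerable (ι ⊕ ℕ)) := nonempty_denumerable _
  let eq : ℕ ≃ ι ⊕ ℕ := (Denumerable.eqv (ι ⊕ ℕ)).symm
  have hcov : E ⊆ interior (⋃ i, dyadicCube n (c' (eq i)).1 (c' (eq i)).2) := by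
    refine h.trans (interior_mono ?_)
    refine iUnion_subset fun i => ?_
    refine subset_iUnion_of_subset (eq.symm (Sum.inl i)) ?_
    simp [c']
  refine (iInf₂_le (fun i => c' (eq i)) hcov).trans ?_
  rw [eq.tsum_eq (fun i => ENNReal.ofReal (((2 : ℝ) ^ (c' i).1) ^ δ))]
  rw [ENNReal.summable.tsum_sum (f := fun i => ENNReal.ofReal (((2 : ℝ) ^ (c' i).1) ^ δ))
    ENNReal.summable]
  simp only [c', Sum.elim_inl, Sum.elim_inr]
  gcongr
  exact (ENNReal.tsum_le_tsum hk).trans hes.le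

theorem content_mono {n : ℕ} {δ : ℝ} {E F : Set (En n)} (h : E ⊆ F) :
    dyadicContent n δ E ≤ dyadicContent n δ F :=
  le_iInf₂ fun c hc => iInf₂_le c (h.trans hc)

theorem content_union {n : ℕ} {δ : ℝ} (hδ : 0 < δ) (E F : Set (En n)) :
    dyadicContent n δ (E ∪ F) ≤ dyadicContent n δ E + dyadicContent n δ F := by
  conv_rhs => unfold dyadicContent
  simp_rw [ENNReal.iInf_add, ENNReal.add_iInf]
  refine le_iInf₂ fun c hc => le_iInf₂ fun c' hc' => ?_
  refine (content_le_of_cover hδ (Sum.elim c c') (E ∪ F) ?_).trans ?_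
  · refine union_subset (hc.trans (interior_mono ?_)) (hc'.trans (interior_mono ?_))
    · exact iUnion_subset fun i => subset_iUnion_of_subset (Sum.inl i) (by simp)
    · exact iUnion_subset fun i => subset_iUnion_of_subset (Sum.inr i) (by simp)
  · rw [ENNReal.summable.tsum_sum ENNReal.summable]
    simp

theorem abs_coord_le {n : ℕ} (x y : En n) (i : Fin n) : |x i - y i| ≤ dist x y := by
  have := PiLp.norm_apply_le (x - y) i
  rw [dist_eq_norm]
  simpa using this

theorem thickening_sub {n : ℕ} (k : ℤ) (m : Fin n → ℤ) :
    thickening ((2 : ℝ) ^ k) (dyadicCube n k m) ⊆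
      ⋃ d : Fin n → Fin 3, dyadicCube n k (fun i => m i + (d i : ℕ) - 1) := by
  intro y hy
  obtain ⟨x, hx, hxy⟩ := mem_thickening_iff.1 hy
  have h2 : (0 : ℝ) < 2 ^ k := by positivity
  have key : ∀ i, ∃ d : Fin 3, (((m i + (d : ℕ) - 1 : ℤ)) : ℝ) * 2 ^ k ≤ y i ∧
      y i < (((m i + (d : ℕ) - 1 : ℤ) : ℝ) + 1) * 2 ^ k := by
    intro i
    have h3 := abs_lt.1 ((abs_coord_le y x i).trans_lt hxy)
    obtain ⟨h4, h5⟩ := hx i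
    by_cases ha : y i < m i * 2 ^ k
    · refine ⟨0, ?_⟩
      push_cast
      simp
      constructor <;> nlinarith
    · by_cases hb : y i < (m i + 1) * 2 ^ k
      · refine ⟨1, ?_⟩
        push_cast
        simp
        constructor <;> nlinarith
      · refine ⟨2, ?_⟩
        push_cast
        simp
        constructor <;> nlinarith
  choose d hd using key
  exact mem_iUnion.2 ⟨d, hd⟩

theorem content_le_of_thickening {n : ℕ} {δ : ℝ} (hδ : 0 < δ) {ι : Type} [Countable ι]
    (c : ι → ℤ × (Fin n → ℤ)) (E : Set (En n))
    (h : E ⊆ ⋃ i, thickening ((2 : ℝ) ^ (c i).1) (dyadicCube n (c i).1 (c i).2)) :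
    dyadicContent n δ E ≤ 3 ^ n * ∑' i, ENNReal.ofReal (((2 : ℝ) ^ (c i).1) ^ δ) := by
  refine (content_le_of_cover hδ (ι := ι × (Fin n → Fin 3))
    (fun p => ((c p.1).1, fun i => (c p.1).2 i + (p.2 i : ℕ) - 1)) E ?_).trans ?_
  · refine h.trans ?_
    refine interior_maximal ?_ (isOpen_iUnion fun i => isOpen_thickening)
    refine iUnion_subset fun i => (thickening_sub _ _).trans ?_
    refine iUnion_subset fun d => ?_
    exact subset_iUnion_of_subset (i, d) (by simp)
  · rw [ENNReal.tsum_prod', ← ENNReal.tsum_mul_left]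
    refine ENNReal.tsum_le_tsum fun i => ?_
    simp

theorem exists_dyadic {r : ℝ} (hr : 0 < r) : ∃ k : ℤ, r ≤ 2 ^ k ∧ (2 : ℝ) ^ k ≤ 2 * r := by
  obtain ⟨k, hk⟩ := exists_mem_Ioc_zpow (y := (2 : ℝ)) hr (by norm_num)
  refine ⟨k + 1, hk.2, ?_⟩
  rw [zpow_add_one₀ (by norm_num)]
  linarith [hk.1]

theorem exists_cube {n : ℕ} (x : En n) (k : ℤ) : ∃ m, x ∈ dyadicCube n k m := by
  have h2 : (0 : ℝ) < 2 ^ k := by positivity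
  refine ⟨fun i => ⌊x i / 2 ^ k⌋, fun i => ⟨?_, ?_⟩⟩
  · exact (le_div_iff₀ h2).1 (Int.floor_le _)
  · exact (div_lt_iff₀ h2).1 (Int.lt_floor_add_one _)

theorem content_le_of_balls {n : ℕ} {δ : ℝ} (hδ : 0 < δ) {ι : Type} [Countable ι]
    (x : ι → En n) (r : ι → ℝ) (hr : ∀ i, 0 < r i) (E : Set (En n))
    (h : E ⊆ ⋃ i, ball (x i) (r i)) :
    dyadicContent n δ E ≤ 3 ^ n * ∑' i, ENNReal.ofReal ((2 * r i) ^ δ) := by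
  choose k hk1 hk2 using fun i => exists_dyadic (hr i)
  choose m hm using fun i => exists_cube (x i) (k i)
  refine (content_le_of_thickening hδ (fun i => (k i, m i)) E ?_).trans ?_
  · refine h.trans (iUnion_mono fun i => ?_)
    exact (ball_subset_ball (hk1 i)).trans (ball_subset_thickening (hm i) _)
  · gcongr with i
    exact hk2 i

theorem cube_dist {n : ℕ} {k : ℤ} {m : Fin n → ℤ} {x y : En n}
    (hx : x ∈ dyadicCube n k m) (hy : y ∈ dyadicCube n k m) : dist x y ≤ n * 2 ^ k := by
  have h2 : (0 : ℝ) < 2 ^ k := by positivity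
  rw [EuclideanSpace.dist_eq]
  refine Real.sqrt_le_iff.2 ⟨by positivity, ?_⟩
  have : ∀ i ∈ Finset.univ, dist (x i) (y i) ^ 2 ≤ ((2 : ℝ) ^ k) ^ 2 := by
    intro i _
    rw [Real.dist_eq, sq_abs]
    refine sq_le_sq' ?_ ?_ <;> nlinarith [hx i, hy i]
  refine (Finset.sum_le_sum this).trans ?_
  simp only [Finset.sum_const, Finset.card_univ, Fintype.card_fin, nsmul_eq_mul]
  rw [mul_pow]
  gcongr
  rcases Nat.eq_zero_or_pos n with h | h
  · simp [h]
  · have : (1 : ℝ) ≤ n := by exact_mod_cast h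
    nlinarith

/-- corner -/
def corner (n : ℕ) (k : ℤ) (m : Fin n → ℤ) : En n := WithLp.toLp 2 fun i => (m i : ℝ) * 2 ^ k

theorem corner_mem {n : ℕ} (k : ℤ) (m : Fin n → ℤ) : corner n k m ∈ dyadicCube n k m := by
  have h2 : (0 : ℝ) < 2 ^ k := by positivity
  intro i
  simp only [corner]
  constructor <;> nlinarith

theorem volume_le_content {n : ℕ} (E : Set (En n)) :
    volume E ≤ (ENNReal.ofReal ((n + 1 : ℝ) ^ n) * volume (ball (0 : En n) 1)) *
      dyadicContent n n E := by
  have hC : ENNReal.ofReal ((n + 1 : ℝ) ^ n) * volume (ball (0 : En n) 1) ≠ ⊤ :=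
    ENNReal.mul_ne_top (by simp) measure_ball_lt_top.ne
  unfold dyadicContent
  rw [ENNReal.mul_iInf_of_ne]
  rotate_left
  · refine mul_ne_zero ?_ ?_
    · simp; positivity
    · exact (measure_ball_pos _ _ one_pos).ne'
  · exact hC
  refine le_iInf fun c => ?_
  by_cases hc : E ⊆ interior (⋃ i, dyadicCube n (c i).1 (c i).2)
  swap
  · simp only [hc, iInf_false]
    rw [ENNReal.mul_top]
    · exact le_top
    · refine mul_ne_zero ?_ ?_
      · simp; positivity
      · exact (measure_ball_pos _ _ one_pos).ne'
  simp only [hc, iInf_true]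
  refine (measure_mono (hc.trans interior_subset)).trans ?_
  refine (measure_iUnion_le _).trans ?_
  rw [← ENNReal.tsum_mul_left]
  refine ENNReal.tsum_le_tsum fun i => ?_
  have h2 : (0 : ℝ) < 2 ^ (c i).1 := by positivity
  have hsub : dyadicCube n (c i).1 (c i).2 ⊆
      ball (corner n (c i).1 (c i).2) ((n + 1) * 2 ^ (c i).1) := by
    intro y hy
    rw [mem_ball]
    have := cube_dist hy (corner_mem (c i).1 (c i).2)
    nlinarith
  refine (measure_mono hsub).trans ?_
  rw [Measure.addHaar_ball_of_pos volume _ (by positivity)]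
  simp only [finrank_euclideanSpace, Fintype.card_fin]
  rw [mul_pow, ENNReal.ofReal_mul (by positivity), Real.rpow_natCast]
  rw [mul_right_comm]

theorem lint_upper (h : ℝ → ℝ≥0∞) (hh : Antitone h) (h0 : ℝ≥0∞) (hb : ∀ s, h s ≤ h0)
    {a : ℝ} (ha : 0 < a) :
    ∫⁻ s in Ioi (0 : ℝ), h s ≤
      ENNReal.ofReal a * h0 + ENNReal.ofReal a * ∑' k : ℕ, 2 ^ k * h (2 ^ k * a) := by
  have hsub : Ioi (0 : ℝ) ⊆ Ioc 0 a ∪ ⋃ k : ℕ, Ioc (2 ^ k * a) (2 ^ (k + 1) * a) := by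
    intro s hs
    have hs' : 0 < s := hs
    by_cases hsa : s ≤ a
    · exact Or.inl ⟨hs, hsa⟩
    · right
      push Not at hsa
      obtain ⟨j, hj⟩ := exists_mem_Ioc_zpow (x := s / a) (y := (2 : ℝ)) (by positivity)
        (by norm_num)
      have h1 : 1 < s / a := (one_lt_div ha).2 hsa
      have hj0 : 0 ≤ j := by
        by_contra hneg
        push Not at hneg
        have : (2 : ℝ) ^ (j + 1) ≤ 1 := zpow_le_one_of_nonpos₀ (by norm_num) (by omega)
        linarith [hj.2]
      lift j to ℕ using hj0
      refine mem_iUnion.2 ⟨j, ?_, ?_⟩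
      · have := hj.1
        rw [zpow_natCast, lt_div_iff₀ ha] at this
        exact this
      · have := hj.2
        rw [div_le_iff₀ ha] at this
        exact_mod_cast this
  refine (lintegral_mono_set hsub).trans ((lintegral_union_le _ _ _).trans ?_)
  refine add_le_add ?_ ?_
  · refine (lintegral_mono (g := fun _ => h0) (fun s => hb s)).trans ?_
    simp [mul_comm]
  · refine (lintegral_iUnion_le _ _).trans ?_
    rw [← ENNReal.tsum_mul_left]
    refine ENNReal.tsum_le_tsum fun k => ?_
    refine (setLIntegral_mono' (g := fun _ => h (2 ^ k * a)) measurableSet_Ioc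
      (fun s hs => hh hs.1.le)).trans ?_
    rw [setLIntegral_const, Real.volume_Ioc]
    have : (2 : ℝ) ^ (k + 1) * a - 2 ^ k * a = a * 2 ^ k := by ring
    rw [this, ENNReal.ofReal_mul ha.le, ENNReal.ofReal_pow (by norm_num)]
    simp only [ENNReal.ofReal_ofNat]
    rw [mul_comm, mul_assoc]

theorem lint_lower (h : ℝ → ℝ≥0∞) (hh : Antitone h) {a : ℝ} (ha : 0 < a) :
    ENNReal.ofReal a * ∑' k : ℕ, 2 ^ k * h (2 ^ k * a) ≤ 2 * ∫⁻ s in Ioi (0 : ℝ), h s := by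
  let f : ℕ → ℝ := fun k => 2 ^ k * (a / 2)
  have hf : Monotone f := by
    intro i j hij
    simp only [f]
    gcongr
    norm_num
  have hd := hf.pairwise_disjoint_on_Ioc_succ
  have hsub : (⋃ k : ℕ, Ioc (f k) (f (Order.succ k))) ⊆ Ioi 0 := by
    refine iUnion_subset fun k s hs => ?_
    have : 0 < f k := by simp only [f]; positivity
    exact this.trans hs.1
  refine le_trans ?_ (mul_le_mul_right (lintegral_mono_set hsub) 2)
  rw [lintegral_iUnion (fun k => measurableSet_Ioc) hd, ← ENNReal.tsum_mul_left,
    ← ENNReal.tsum_mul_left]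
  refine ENNReal.tsum_le_tsum fun k => ?_
  have e1 : f (Order.succ k) = 2 ^ k * a := by
    simp only [f, Nat.succ_eq_succ, Nat.succ_eq_add_one]; ring
  rw [e1]
  have : ∫⁻ s in Ioc (f k) (2 ^ k * a), h (2 ^ k * a) ≤ ∫⁻ s in Ioc (f k) (2 ^ k * a), h s :=
    setLIntegral_mono' measurableSet_Ioc (fun s hs => hh hs.2)
  refine le_trans (le_of_eq ?_) (mul_le_mul_right this 2)
  rw [setLIntegral_const, Real.volume_Ioc]
  have e2 : (2 : ℝ) ^ k * a - f k = a * 2 ^ k / 2 := by simp only [f]; ring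
  have e3 : (2 : ℝ≥0∞) * ENNReal.ofReal (a * 2 ^ k / 2) = ENNReal.ofReal a * 2 ^ k := by
    have : (2 : ℝ≥0∞) = ENNReal.ofReal 2 := by simp
    rw [this, ← ENNReal.ofReal_pow (by norm_num), ← ENNReal.ofReal_mul (by norm_num),
      ← ENNReal.ofReal_mul ha.le]
    congr 1
    ring
  rw [e2, mul_comm (h _), ← mul_assoc, ← mul_assoc, e3]

/-- the discrete measure carried by the cubes of the covers -/
def cubeMeasure (n : ℕ) (δ : ℝ) (c : ℕ → ℕ → ℤ × (Fin n → ℤ)) : Measure (En n) :=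
  Measure.sum fun p : ℕ × ℕ =>
    ((2 : ℝ≥0∞) ^ p.1 * ENNReal.ofReal (((2 : ℝ) ^ (c p.1 p.2).1) ^ δ)) •
      Measure.dirac (corner n (c p.1 p.2).1 (c p.1 p.2).2)

theorem cubeMeasure_apply (n : ℕ) (δ : ℝ) (c : ℕ → ℕ → ℤ × (Fin n → ℤ)) {S : Set (En n)}
    (hS : MeasurableSet S) :
    cubeMeasure n δ c S = ∑' k : ℕ, 2 ^ k * ∑' i : ℕ,
      ENNReal.ofReal (((2 : ℝ) ^ (c k i).1) ^ δ) *
        S.indicator 1 (corner n (c k i).1 (c k i).2) := by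
  rw [cubeMeasure, Measure.sum_apply _ hS, ENNReal.tsum_prod']
  refine tsum_congr fun k => ?_
  rw [← ENNReal.tsum_mul_left]
  refine tsum_congr fun i => ?_
  rw [Measure.smul_apply, Measure.dirac_apply' _ hS, smul_eq_mul, mul_assoc]

theorem content_ball_inter_le {n : ℕ} {δ : ℝ} (hn : 1 ≤ n) (hδn : δ < n)
    (c : ℕ → ℤ × (Fin n → ℤ)) (E : Set (En n))
    (hE : E ⊆ ⋃ i, dyadicCube n (c i).1 (c i).2) (x : En n)
    (hx : ∀ i, x ∉ thickening ((2 : ℝ) ^ (c i).1) (dyadicCube n (c i).1 (c i).2))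
    {r : ℝ} (hr : 0 < r) :
    dyadicContent n n (ball x r ∩ E) ≤ 3 ^ n * (ENNReal.ofReal (r ^ (n - δ)) *
      ∑' i, ENNReal.ofReal (((2 : ℝ) ^ (c i).1) ^ δ) *
        (closedBall x ((n + 1) * r)).indicator 1 (corner n (c i).1 (c i).2)) := by
  have hn0 : (0 : ℝ) < n := by exact_mod_cast hn
  let J := {i // (dyadicCube n (c i).1 (c i).2 ∩ ball x r).Nonempty}
  refine (content_le_of_thickening hn0 (fun i : J => c i) _ ?_).trans ?_
  · rintro y ⟨hy1, hy2⟩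
    obtain ⟨i, hi⟩ := mem_iUnion.1 (hE hy2)
    refine mem_iUnion.2 ⟨⟨i, y, hi, hy1⟩, ?_⟩
    exact self_subset_thickening (by positivity) _ hi
  · gcongr
    rw [← ENNReal.tsum_mul_left]
    have hle : ∀ i : J, ENNReal.ofReal (((2 : ℝ) ^ (c i).1) ^ (n : ℝ)) ≤
        ENNReal.ofReal (r ^ (n - δ)) * (ENNReal.ofReal (((2 : ℝ) ^ (c i).1) ^ δ) *
        (closedBall x ((n + 1) * r)).indicator 1 (corner n (c i).1 (c i).2)) := by
      rintro ⟨i, y, hy1, hy2⟩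
      simp only
      have h2 : (0 : ℝ) < 2 ^ (c i).1 := by positivity
      have hlr : (2 : ℝ) ^ (c i).1 ≤ r := by
        by_contra hcon
        push Not at hcon
        apply hx i
        rw [mem_thickening_iff]
        exact ⟨y, hy1, by rw [dist_comm]; exact (mem_ball.1 hy2).trans hcon⟩
      have hmem : corner n (c i).1 (c i).2 ∈ closedBall x ((n + 1) * r) := by
        rw [mem_closedBall]
        have h3 := cube_dist (corner_mem (c i).1 (c i).2) hy1
        have h4 := mem_ball.1 hy2
        have h5 := dist_triangle (corner n (c i).1 (c i).2) y x
        nlinarith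
      rw [indicator_of_mem hmem, Pi.one_apply, mul_one, ← ENNReal.ofReal_mul (by positivity)]
      apply ENNReal.ofReal_le_ofReal
      have : ((2 : ℝ) ^ (c i).1) ^ (n : ℝ) =
          ((2 : ℝ) ^ (c i).1) ^ ((n : ℝ) - δ) * ((2 : ℝ) ^ (c i).1) ^ δ := by
        rw [← Real.rpow_add h2]; congr 1; ring
      rw [this]
      gcongr
    refine (ENNReal.tsum_le_tsum hle).trans ?_
    exact ENNReal.tsum_comp_le_tsum_of_injective Subtype.val_injective
      (fun i => ENNReal.ofReal (r ^ (n - δ)) * (ENNReal.ofReal (((2 : ℝ) ^ (c i).1) ^ δ) *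
        (closedBall x ((n + 1) * r)).indicator 1 (corner n (c i).1 (c i).2)))

theorem pointwise_bound {n : ℕ} {δ : ℝ} (hn : 1 ≤ n) (hδn : δ < n)
    (c : ℕ → ℕ → ℤ × (Fin n → ℤ)) (E : ℕ → Set (En n))
    (hE : ∀ k, E k ⊆ ⋃ i, dyadicCube n (c k i).1 (c k i).2) (x : En n)
    (hx : ∀ k i, x ∉ thickening ((2 : ℝ) ^ (c k i).1) (dyadicCube n (c k i).1 (c k i).2))
    {r : ℝ} (hr : 0 < r)
    (hW : dyadicContent n n (ball x r) ≤ ∑' k : ℕ, 2 ^ k * dyadicContent n n (ball x r ∩ E k)) :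
    ENNReal.ofReal (r ^ δ) ≤ ENNReal.ofReal ((n + 1 : ℝ) ^ n) * 3 ^ n *
      cubeMeasure n δ c (closedBall x ((n + 1) * r)) := by
  rw [cubeMeasure_apply _ _ _ isClosed_closedBall.measurableSet]
  set S : ℕ → ℝ≥0∞ := fun k => ∑' i : ℕ,
      ENNReal.ofReal (((2 : ℝ) ^ (c k i).1) ^ δ) *
        (closedBall x ((n + 1) * r)).indicator 1 (corner n (c k i).1 (c k i).2) with hS
  have h1 : dyadicContent n n (ball x r) ≤
      3 ^ n * (ENNReal.ofReal (r ^ (n - δ)) * ∑' k : ℕ, 2 ^ k * S k) := by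
    refine hW.trans ?_
    rw [← ENNReal.tsum_mul_left, ← ENNReal.tsum_mul_left]
    refine ENNReal.tsum_le_tsum fun k => ?_
    refine (mul_le_mul_right (content_ball_inter_le hn hδn (c k) (E k) (hE k) x (hx k) hr)
      _).trans (le_of_eq ?_)
    simp only [hS]
    ring
  have h2 := volume_le_content (ball x r)
  rw [Measure.addHaar_ball_of_pos volume _ hr] at h2
  simp only [finrank_euclideanSpace, Fintype.card_fin] at h2
  have hv0 : volume (ball (0 : En n) 1) ≠ 0 := (measure_ball_pos _ _ one_pos).ne'
  have hvt : volume (ball (0 : En n) 1) ≠ ⊤ := measure_ball_lt_top.ne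
  have h3 : ENNReal.ofReal (r ^ n) ≤
      ENNReal.ofReal ((n + 1 : ℝ) ^ n) * dyadicContent n n (ball x r) := by
    rw [mul_right_comm] at h2
    exact (ENNReal.mul_le_mul_iff_left hv0 hvt).1 h2
  have h4 : ENNReal.ofReal (r ^ (n - δ)) * ENNReal.ofReal (r ^ δ) = ENNReal.ofReal (r ^ n) := by
    rw [← ENNReal.ofReal_mul (by positivity), ← Real.rpow_add hr]
    congr 1
    rw [sub_add_cancel, Real.rpow_natCast]
  have hp : ENNReal.ofReal (r ^ ((n : ℝ) - δ)) ≠ 0 := by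
    simp; positivity
  refine (ENNReal.mul_le_mul_iff_right hp ENNReal.ofReal_ne_top).1 ?_
  rw [h4]
  refine h3.trans ((mul_le_mul_right h1 _).trans (le_of_eq ?_))
  ring

theorem vitali_content {n : ℕ} {δ : ℝ} (hδ : 0 < δ) (μ : Measure (En n)) (hμ : μ univ ≠ ⊤)
    {K : ℝ≥0∞} (hK : K ≠ ⊤) {L : ℝ} (hL : 0 < L) (A : Set (En n))
    (hA : ∀ x ∈ A, ∃ r : ℝ, 0 < r ∧ ENNReal.ofReal (r ^ δ) ≤ K * μ (closedBall x (L * r))) :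
    dyadicContent n δ A ≤
      3 ^ n * (ENNReal.ofReal ((10 * L) ^ δ) * (K * μ univ)) := by
  choose! r hr0 hr using hA
  have hKμ : K * μ univ ≠ ⊤ := ENNReal.mul_ne_top hK hμ
  have hbd : ∀ x ∈ A, L * r x ≤ L * (K * μ univ).toReal ^ (1 / δ) := by
    intro x hx
    have h1 : ENNReal.ofReal (r x ^ δ) ≤ K * μ univ :=
      (hr x hx).trans (mul_le_mul_right (measure_mono (subset_univ _)) _)
    have h2 : r x ^ δ ≤ (K * μ univ).toReal := (ENNReal.ofReal_le_iff_le_toReal hKμ).1 h1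
    have h3 := Real.rpow_le_rpow (by have := hr0 x hx; positivity) h2
      (by positivity : (0 : ℝ) ≤ 1 / δ)
    rw [← Real.rpow_mul (hr0 x hx).le, mul_one_div_cancel hδ.ne', Real.rpow_one] at h3
    gcongr
  obtain ⟨u, huA, hud, hucov⟩ := Vitali.exists_disjoint_subfamily_covering_enlargement_closedBall
    A (fun x => x) (fun x => L * r x) _ hbd 4 (by norm_num)
  have hucount : u.Countable := by
    refine hud.countable_of_nonempty_interior fun x hx => ?_
    refine ⟨x, ball_subset_interior_closedBall (mem_ball_self ?_)⟩
    have := hr0 x (huA hx)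
    positivity
  have := hucount.to_subtype
  refine (content_le_of_balls hδ (fun i : u => (i : En n)) (fun i => 5 * (L * r i))
    (fun i => by have := hr0 i (huA i.2); positivity) A ?_).trans ?_
  · intro x hx
    obtain ⟨b, hb, hsub⟩ := hucov x hx
    have hx0 := hr0 x hx
    have hb0 := hr0 b (huA hb)
    have hxb := hsub (mem_closedBall_self (by positivity))
    refine mem_iUnion.2 ⟨⟨b, hb⟩, ?_⟩
    rw [mem_closedBall] at hxb
    rw [mem_ball]
    simp only
    have : 0 < L * r b := by positivity
    linarith
  · gcongr
    have hterm : ∀ i : u, ENNReal.ofReal ((2 * (5 * (L * r i))) ^ δ) ≤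
        ENNReal.ofReal ((10 * L) ^ δ) * (K * μ (closedBall (i : En n) (L * r i))) := by
      intro i
      have hi0 := hr0 i (huA i.2)
      have e : (2 * (5 * (L * r i))) = (10 * L) * r i := by ring
      rw [e, Real.mul_rpow (by positivity) hi0.le, ENNReal.ofReal_mul (by positivity)]
      gcongr
      exact hr i (huA i.2)
    refine (ENNReal.tsum_le_tsum hterm).trans ?_
    rw [ENNReal.tsum_mul_left, ENNReal.tsum_mul_left]
    gcongr
    rw [← measure_biUnion hucount hud (fun i _ => isClosed_closedBall.measurableSet)]
    exact measure_mono (subset_univ _)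

theorem main_eta {n : ℕ} {δ : ℝ} (hn : 1 ≤ n) (hδ : 0 < δ) (hδn : δ < n)
    (g : En n → ℝ≥0∞) {t : ℝ} (ht : 0 < t)
    (hfin : choquetIntegral n δ univ g ≠ ⊤) {η : ℝ≥0∞} (hη : η ≠ 0) (hηt : η ≠ ⊤) :
    dyadicContent n δ {x | ENNReal.ofReal t < maximal n n g x} ≤
      (3 ^ n * (ENNReal.ofReal ((10 * (n + 1 : ℝ)) ^ δ) *
        (ENNReal.ofReal ((n + 1 : ℝ) ^ n) * 3 ^ n)) + 3 ^ n) *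
      (ENNReal.ofReal (4 / t) * choquetIntegral n δ univ g + η) := by
  have hn0 : (0 : ℝ) < n := by exact_mod_cast hn
  have ha : 0 < t / 2 := by positivity
  set a := t / 2 with hadef
  let E : ℕ → Set (En n) := fun k => {x | ENNReal.ofReal (2 ^ k * a) < g x}
  have hsum : ∑' k : ℕ, 2 ^ k * dyadicContent n δ (E k) ≤
      ENNReal.ofReal (4 / t) * choquetIntegral n δ univ g := by
    have h1 := lint_lower
      (fun s => dyadicContent n δ {x | x ∈ univ ∧ ENNReal.ofReal s < g x})
      (fun s s' hss => content_mono fun x hx =>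
        ⟨hx.1, (ENNReal.ofReal_le_ofReal hss).trans_lt hx.2⟩) ha
    simp only [mem_univ, true_and] at h1
    have e : ENNReal.ofReal (4 / t) = (ENNReal.ofReal a)⁻¹ * 2 := by
      rw [← ENNReal.ofReal_inv_of_pos ha]
      have : (2 : ℝ≥0∞) = ENNReal.ofReal 2 := by simp
      rw [this, ← ENNReal.ofReal_mul (by positivity)]
      congr 1
      rw [hadef]
      field_simp
      norm_num
    have ha0 : ENNReal.ofReal a ≠ 0 := by simpa using ha
    calc ∑' k : ℕ, 2 ^ k * dyadicContent n δ (E k)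
        = (ENNReal.ofReal a)⁻¹ *
          (ENNReal.ofReal a * ∑' k : ℕ, 2 ^ k * dyadicContent n δ (E k)) := by
          rw [← mul_assoc, ENNReal.inv_mul_cancel ha0 ENNReal.ofReal_ne_top, one_mul]
      _ ≤ (ENNReal.ofReal a)⁻¹ * (2 * choquetIntegral n δ univ g) := by
          refine mul_le_mul_right (h1.trans (le_of_eq ?_)) _
          simp [choquetIntegral]
      _ = _ := by rw [e, mul_assoc]
  have hsumtop : ∑' k : ℕ, 2 ^ k * dyadicContent n δ (E k) ≠ ⊤ :=
    ne_top_of_le_ne_top (ENNReal.mul_ne_top ENNReal.ofReal_ne_top hfin) hsum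
  have hEfin : ∀ k, dyadicContent n δ (E k) ≠ ⊤ := by
    intro k hk
    apply ENNReal.ne_top_of_tsum_ne_top hsumtop k
    rw [hk]
    exact ENNReal.mul_top (by positivity)
  obtain ⟨e, he0, hes⟩ := ENNReal.exists_pos_sum_of_countable' hη ℕ
  have hcov : ∀ k, ∃ c : ℕ → ℤ × (Fin n → ℤ),
      E k ⊆ (⋃ i, dyadicCube n (c i).1 (c i).2) ∧
      2 ^ k * ∑' i, ENNReal.ofReal (((2 : ℝ) ^ (c i).1) ^ δ) ≤
        2 ^ k * dyadicContent n δ (E k) + e k := by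
    intro k
    have h2k : (2 : ℝ≥0∞) ^ k ≠ ⊤ := by simp
    have h2k0 : (2 : ℝ≥0∞) ^ k ≠ 0 := by simp
    have hlt : dyadicContent n δ (E k) < dyadicContent n δ (E k) + e k / 2 ^ k :=
      ENNReal.lt_add_right (hEfin k) (ENNReal.div_pos (he0 k).ne' h2k).ne'
    conv_lhs at hlt => unfold dyadicContent
    obtain ⟨c, hc⟩ := iInf_lt_iff.1 hlt
    obtain ⟨hc1, hc2⟩ := iInf_lt_iff.1 hc
    refine ⟨c, hc1.trans interior_subset, ?_⟩
    refine (mul_le_mul_right hc2.le _).trans (le_of_eq ?_)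
    rw [mul_add, ENNReal.mul_div_cancel h2k0 h2k]
  choose c hc1 hc2 using hcov
  have hμ : cubeMeasure n δ c univ = ∑' k : ℕ, 2 ^ k * ∑' i : ℕ,
      ENNReal.ofReal (((2 : ℝ) ^ (c k i).1) ^ δ) := by
    rw [cubeMeasure_apply _ _ _ MeasurableSet.univ]
    simp
  have hμle : cubeMeasure n δ c univ ≤
      ENNReal.ofReal (4 / t) * choquetIntegral n δ univ g + η := by
    rw [hμ]
    refine (ENNReal.tsum_le_tsum hc2).trans ?_
    rw [ENNReal.tsum_add]
    exact add_le_add hsum hes.le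
  have hμtop : cubeMeasure n δ c univ ≠ ⊤ :=
    ne_top_of_le_ne_top (ENNReal.add_ne_top.2
      ⟨ENNReal.mul_ne_top ENNReal.ofReal_ne_top hfin, hηt⟩) hμle
  set T : Set (En n) := ⋃ p : ℕ × ℕ, thickening ((2 : ℝ) ^ (c p.1 p.2).1)
    (dyadicCube n (c p.1 p.2).1 (c p.1 p.2).2) with hT
  set G : Set (En n) := {x | ENNReal.ofReal t < maximal n n g x} with hG
  have hTle : dyadicContent n δ T ≤ 3 ^ n * cubeMeasure n δ c univ := by
    refine (content_le_of_thickening hδ (fun p : ℕ × ℕ => c p.1 p.2) T subset_rfl).trans ?_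
    gcongr
    rw [hμ, ENNReal.tsum_prod']
    refine ENNReal.tsum_le_tsum fun k => ?_
    exact le_mul_of_one_le_left' (one_le_pow₀ (by norm_num))
  have hA : dyadicContent n δ (G \ T) ≤ 3 ^ n * (ENNReal.ofReal ((10 * (n + 1 : ℝ)) ^ δ) *
      (ENNReal.ofReal ((n + 1 : ℝ) ^ n) * 3 ^ n * cubeMeasure n δ c univ)) := by
    refine vitali_content hδ _ hμtop (ENNReal.mul_ne_top ENNReal.ofReal_ne_top (by simp))
      (by positivity) _ ?_
    rintro x ⟨hxG, hxT⟩
    have hxG' : ENNReal.ofReal t < ⨆ (r : ℝ) (_ : 0 < r), ballAvg n n g x r := hxG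
    obtain ⟨r, hxG'⟩ := lt_iSup_iff.1 hxG'
    obtain ⟨hr, havg⟩ := lt_iSup_iff.1 hxG'
    refine ⟨r, hr, ?_⟩
    refine pointwise_bound hn hδn c E hc1 x ?_ hr ?_
    · intro k i hki
      exact hxT (mem_iUnion.2 ⟨(k, i), hki⟩)
    · have h1 := ENNReal.mul_lt_of_lt_div havg
      have hWtop : dyadicContent n n (ball x r) ≠ ⊤ := by
        refine ne_top_of_le_ne_top ?_ (content_le_of_balls hn0 (ι := Unit) (fun _ => x)
          (fun _ => r) (fun _ => hr) _ (fun y hy => mem_iUnion.2 ⟨(), hy⟩))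
        rw [tsum_fintype]
        have h3t : (3 : ℝ≥0∞) ^ n ≠ ⊤ := by simp
        refine ENNReal.mul_ne_top h3t ?_
        simp
      have h2 := lint_upper
        (fun s => dyadicContent n n {y | y ∈ ball x r ∧ ENNReal.ofReal s < g y})
        (fun s s' hss => content_mono fun y hy =>
          ⟨hy.1, (ENNReal.ofReal_le_ofReal hss).trans_lt hy.2⟩)
        (dyadicContent n n (ball x r)) (fun s => content_mono fun y hy => hy.1) ha
      have h3 := h1.trans_le h2
      have e : ENNReal.ofReal t = ENNReal.ofReal a + ENNReal.ofReal a := by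
        rw [← ENNReal.ofReal_add ha.le ha.le]
        congr 1
        rw [hadef]; ring
      rw [e, add_mul] at h3
      have h4 := lt_of_add_lt_add_left h3
      have ha0 : ENNReal.ofReal a ≠ 0 := by simpa using ha
      have h5 := (ENNReal.mul_le_mul_iff_right ha0 ENNReal.ofReal_ne_top).1 h4.le
      exact h5
  calc dyadicContent n δ G ≤ dyadicContent n δ (G \ T ∪ T) :=
        content_mono (by rw [sdiff_union_self]; exact subset_union_left)
    _ ≤ _ := content_union hδ _ _
    _ ≤ _ := add_le_add hA hTle
    _ = (3 ^ n * (ENNReal.ofReal ((10 * (n + 1 : ℝ)) ^ δ) *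
        (ENNReal.ofReal ((n + 1 : ℝ) ^ n) * 3 ^ n)) + 3 ^ n) * cubeMeasure n δ c univ := by ring
    _ ≤ _ := mul_le_mul_right hμle _

/-- weak-type estimate for the `n`-dimensional Hausdorff-content centred
maximal operator `M^n` with respect to `H̃^δ_∞`, `0 < δ < n`, for arbitrary
extended-real-valued functions that are locally `nL¹(H̃^δ_∞)`. -/
theorem weak_type_maximal_n (n : ℕ) (hn : 1 ≤ n) (δ : ℝ) (hδ0 : 0 < δ) (hδn : δ < n) :
    ∃ c : ℝ, 0 < c ∧ ∀ f : En n → EReal,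
      (∀ K : Set (En n), Bornology.IsBounded K → choquetIntegralEAbs n δ K f < ⊤) →
      ∀ t : ℝ, 0 < t →
        dyadicContent n δ
            {x | ENNReal.ofReal t < maximal n (n : ℝ) (fun y => (f y).abs) x} ≤
          ENNReal.ofReal (c / t) * choquetIntegralEAbs n δ univ f := by
  set C : ℝ≥0∞ := 3 ^ n * (ENNReal.ofReal ((10 * (n + 1 : ℝ)) ^ δ) *
        (ENNReal.ofReal ((n + 1 : ℝ) ^ n) * 3 ^ n)) + 3 ^ n with hC
  have h3t : (3 : ℝ≥0∞) ^ n ≠ ⊤ := by simp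
  have hCt : C ≠ ⊤ := ENNReal.add_ne_top.2 ⟨ENNReal.mul_ne_top h3t
    (ENNReal.mul_ne_top ENNReal.ofReal_ne_top
      (ENNReal.mul_ne_top ENNReal.ofReal_ne_top h3t)), h3t⟩
  have hC0 : C ≠ 0 := by
    rw [hC]
    positivity
  have hCr : 0 < C.toReal := ENNReal.toReal_pos hC0 hCt
  refine ⟨C.toReal * 4, by positivity, ?_⟩
  intro f _ t ht
  unfold choquetIntegralEAbs
  by_cases hfin : choquetIntegral n δ univ (fun x => (f x).abs) = ⊤
  · rw [hfin, ENNReal.mul_top]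
    · exact le_top
    · have : 0 < C.toReal * 4 / t := by positivity
      simpa using this
  have hCe : ENNReal.ofReal (C.toReal * 4 / t) = C * ENNReal.ofReal (4 / t) := by
    rw [mul_div_assoc, ENNReal.ofReal_mul hCr.le, ENNReal.ofReal_toReal hCt]
  rw [hCe]
  refine ENNReal.le_of_forall_pos_le_add ?_
  intro ε hε _
  have hε' : (ε : ℝ≥0∞) ≠ 0 := by simpa using hε.ne'
  refine (main_eta hn hδ0 hδn _ ht hfin (η := ε / C)
    (ENNReal.div_pos hε' hCt).ne' (ENNReal.div_ne_top ENNReal.coe_ne_top hC0)).trans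
    (le_of_eq ?_)
  rw [← hC, mul_add, ENNReal.mul_div_cancel hC0 hCt, mul_assoc]
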